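/- The score of the parameter-driven likelihood with respect to the latent variance at τ = 0 (obtained by L'Hôpital's rule) is given explicitly as follows. Fix n ≥ 1, integers m_t ≥ 1 and 0 ≤ y_t ≤ m_t, vectors x_t ∈ ℝʳ, β ∈ ℝʳ, and an n × n symmetric positive-definite matrix R with unit diagonal entries. Define L(τ) = ∫_{ℝⁿ} exp( Σ_{t=1}^n [ y_t (x_tᵀβ + √τ α_t) − m_t b(x_tᵀβ + √τ α_t) ] ) dN(0, R)(α) for τ ≥ 0, where N(0, R) is the centered multivariate normal distribution with covariance R. Then the function τ ↦ log L(τ) is right-differentiable at τ = 0 and its right derivative equals (1/2) Σ_{t=1}^n [ e_t² − m_t b̈(x_tᵀβ) ] + (1/2) Σ_{t=1}^n Σ_{s≠t} e_t e_s R_{s,t}, where e_t = y_t − m_t ḃ(x_tᵀβ). -/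

import Mathlib

/-!
Write `L(τ) = f(√τ)`, where `f(s) = E[exp (∑ ℓ_t(c_t + s X_t))]` averages the likelihood over the
latent vector `X` and `ℓ_t` is the log-likelihood of the linear predictor at time `t`. An upper
bound on `ℓ_t`, bounds on `ℓ_t'` and `ℓ_t''`, and two finite moments of `X` allow differentiating
twice under the expectation.
Since `X` is centered, `f'(0) = 0`, so `L'(τ) = f'(√τ) / (2 √τ)` is half a difference quotient of
`f'` and tends to `f''(0) / 2` as `τ` decreases to `0`: this is L'Hôpital's rule. Finally `f''(0)`
is the expectation of a quadratic form in `X`, which only involves the covariances.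

For the Gaussian vector, the explicit density `mvnDens R` is the image of the standard one under
`z ↦ √R z`, which is how Mathlib defines `multivariateGaussian`.
-/

open MeasureTheory Real Finset Matrix

noncomputable section

/-- `b(w) = log(1 + e^w)`. -/
def bfun (w : ℝ) : ℝ := Real.log (1 + Real.exp w)

/-- `ḃ(w) = e^w / (1 + e^w)`. -/
def bdot (w : ℝ) : ℝ := Real.exp w / (1 + Real.exp w)

/-- `b̈(w) = ḃ(w)(1 − ḃ(w))`. -/
def bddot (w : ℝ) : ℝ := bdot w * (1 - bdot w)

/-- The density of the centered multivariate normal `N(0, R)` on `ℝⁿ`: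
`g(α, R) = (2π)^{−n/2} det(R)^{−1/2} exp(−(1/2) αᵀ R⁻¹ α)`. -/
def mvnDens {n : ℕ} (R : Matrix (Fin n) (Fin n) ℝ) (α : Fin n → ℝ) : ℝ :=
  (2 * Real.pi) ^ (-(n : ℝ) / 2) * R.det ^ (-(1 : ℝ) / 2)
    * Real.exp (-(1 / 2) * (α ⬝ᵥ (R⁻¹ *ᵥ α)))

open ProbabilityTheory Filter Topology

section ChainRuleSqrt

variable {E : Type*} [NormedAddCommGroup E] [NormedSpace ℝ E]

lemma hasDerivWithinAt_comp_sqrt_zero {f f' : ℝ → E} {f'' : E}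
    (hf : ∀ᶠ s in 𝓝[>] 0, HasDerivAt f (f' s) s) (hf_cont : ContinuousWithinAt f (Set.Ici 0) 0)
    (hf' : HasDerivWithinAt f' f'' (Set.Ioi 0) 0) (hf'_zero : f' 0 = 0) :
    HasDerivWithinAt (fun τ => f √τ) ((2⁻¹ : ℝ) • f'') (Set.Ici 0) 0 := by
  have tendsto_sqrt : Tendsto (fun τ : ℝ => √τ) (𝓝[>] 0) (𝓝[>] 0) := by
    refine tendsto_nhdsWithin_iff.2 ⟨?_, ?_⟩
    · simpa using (Real.continuous_sqrt.tendsto 0).mono_left nhdsWithin_le_nhds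
    · filter_upwards [self_mem_nhdsWithin] with τ hτ using Real.sqrt_pos.2 hτ
  have hderiv : ∀ᶠ τ in 𝓝[>] 0,
      HasDerivAt (fun τ => f √τ) ((2⁻¹ : ℝ) • slope f' 0 √τ) τ := by
    filter_upwards [tendsto_sqrt.eventually hf, self_mem_nhdsWithin] with τ hfτ (hτ : 0 < τ)
    refine (hfτ.scomp τ (Real.hasDerivAt_sqrt hτ.ne')).congr_deriv ?_
    rw [slope_def_module, hf'_zero, sub_zero, sub_zero, smul_smul, one_div, mul_inv]
  have hcont : ContinuousAt (fun τ => f √τ) 0 := by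
    rw [← continuousWithinAt_univ]
    exact ContinuousWithinAt.comp (t := Set.Ici 0) (by simpa using hf_cont)
      Real.continuous_sqrt.continuousWithinAt fun τ _ => Real.sqrt_nonneg τ
  have hslope : Tendsto (fun τ => (2⁻¹ : ℝ) • slope f' 0 √τ) (𝓝[>] 0) (𝓝 ((2⁻¹ : ℝ) • f'')) :=
    (((hasDerivWithinAt_iff_tendsto_slope' Set.self_notMem_Ioi).1 hf').comp
      tendsto_sqrt).const_smul _
  exact hasDerivWithinAt_Ici_of_tendsto_deriv
    (fun τ (hτ : HasDerivAt _ _ _) => hτ.differentiableAt.differentiableWithinAt)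
    hcont.continuousWithinAt hderiv (hslope.congr' (hderiv.mono fun τ hτ => hτ.deriv.symm))

lemma hasDerivWithinAt_integral_comp_sqrt_zero {Ω : Type*} [MeasurableSpace Ω] {μ : Measure Ω}
    {φ φ' φ'' : ℝ → Ω → E} {g' g'' : Ω → ℝ}
    (hφ : ∀ ω s, HasDerivAt (φ · ω) (φ' s ω) s) (hφ' : ∀ ω s, HasDerivAt (φ' · ω) (φ'' s ω) s)
    (hφ_int : ∀ s, Integrable (φ s) μ) (hφ'_meas : ∀ s, AEStronglyMeasurable (φ' s) μ)
    (hφ''_meas : AEStronglyMeasurable (φ'' 0) μ)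
    (hφ'_le : ∀ ω s, ‖φ' s ω‖ ≤ g' ω) (hg' : Integrable g' μ)
    (hφ''_le : ∀ ω s, ‖φ'' s ω‖ ≤ g'' ω) (hg'' : Integrable g'' μ)
    (hφ'_mean : ∫ ω, φ' 0 ω ∂μ = 0) :
    HasDerivWithinAt (fun τ => ∫ ω, φ √τ ω ∂μ) ((2⁻¹ : ℝ) • ∫ ω, φ'' 0 ω ∂μ) (Set.Ici 0) 0 := by
  have hφ'_int (s : ℝ) : Integrable (φ' s) μ :=
    hg'.mono' (hφ'_meas s) (ae_of_all _ fun ω => hφ'_le ω s)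
  have hderiv (s : ℝ) : HasDerivAt (fun s => ∫ ω, φ s ω ∂μ) (∫ ω, φ' s ω ∂μ) s :=
    (hasDerivAt_integral_of_dominated_loc_of_deriv_le univ_mem
      (Eventually.of_forall fun s => (hφ_int s).aestronglyMeasurable) (hφ_int s) (hφ'_meas s)
      (ae_of_all _ fun ω s _ => hφ'_le ω s) hg' (ae_of_all _ fun ω s _ => hφ ω s)).2
  have hderiv' : HasDerivAt (fun s => ∫ ω, φ' s ω ∂μ) (∫ ω, φ'' 0 ω ∂μ) 0 :=
    (hasDerivAt_integral_of_dominated_loc_of_deriv_le univ_mem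
      (Eventually.of_forall hφ'_meas) (hφ'_int 0) hφ''_meas
      (ae_of_all _ fun ω s _ => hφ''_le ω s) hg'' (ae_of_all _ fun ω s _ => hφ' ω s)).2
  exact hasDerivWithinAt_comp_sqrt_zero (Eventually.of_forall hderiv)
    (hderiv 0).continuousAt.continuousWithinAt hderiv'.hasDerivWithinAt hφ'_mean

end ChainRuleSqrt

/-- A log-likelihood `ℓ` of a scalar linear predictor that is bounded above and has bounded first
and second derivatives `ℓ'` and `ℓ''`: the regularity under which the score at zero latent variance
is computed. -/
structure IsRegularLogLik (ℓ ℓ' ℓ'' : ℝ → ℝ) : Prop where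
  hasDerivAt : ∀ w, HasDerivAt ℓ (ℓ' w) w
  hasDerivAt_deriv : ∀ w, HasDerivAt ℓ' (ℓ'' w) w
  exists_le : ∃ B, ∀ w, ℓ w ≤ B
  exists_abs_deriv_le : ∃ C, ∀ w, |ℓ' w| ≤ C
  exists_abs_deriv_deriv_le : ∃ D, ∀ w, |ℓ'' w| ≤ D

lemma IsRegularLogLik.continuous {ℓ ℓ' ℓ'' : ℝ → ℝ} (hℓ : IsRegularLogLik ℓ ℓ' ℓ'') :
    Continuous ℓ :=
  continuous_iff_continuousAt.2 fun w => (hℓ.hasDerivAt w).continuousAt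

lemma IsRegularLogLik.continuous_deriv {ℓ ℓ' ℓ'' : ℝ → ℝ} (hℓ : IsRegularLogLik ℓ ℓ' ℓ'') :
    Continuous ℓ' :=
  continuous_iff_continuousAt.2 fun w => (hℓ.hasDerivAt_deriv w).continuousAt

section Ray

variable {ι : Type*} [Fintype ι] (ℓ ℓ' ℓ'' : ι → ℝ → ℝ) (c a : ι → ℝ) (s : ℝ)

/-- The likelihood at the linear predictor `c + s a`, as a function of the position `s` on the ray
from `c` with direction `a`. -/
def rayLik : ℝ := Real.exp (∑ t, ℓ t (c t + s * a t))

/-- The first derivative of `rayLik` in `s`, where `ℓ'` stands for the derivative of `ℓ`. -/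
def rayLikDeriv : ℝ := rayLik ℓ c a s * ∑ t, ℓ' t (c t + s * a t) * a t

/-- The second derivative of `rayLik` in `s`, where `ℓ'` and `ℓ''` stand for the derivatives
of `ℓ`. -/
def rayLikDeriv₂ : ℝ :=
  rayLik ℓ c a s *
    ((∑ t, ℓ' t (c t + s * a t) * a t) ^ 2 + ∑ t, ℓ'' t (c t + s * a t) * a t ^ 2)

lemma hasDerivAt_sum_ray {f f' : ι → ℝ → ℝ} (hf : ∀ t w, HasDerivAt (f t) (f' t w) w) :
    HasDerivAt (fun s => ∑ t, f t (c t + s * a t)) (∑ t, f' t (c t + s * a t) * a t) s :=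
  HasDerivAt.fun_sum fun t _ => (hf t _).comp s ((hasDerivAt_mul_const (a t)).const_add (c t))

variable {ℓ ℓ' ℓ''}

lemma hasDerivAt_rayLik (hℓ : ∀ t w, HasDerivAt (ℓ t) (ℓ' t w) w) :
    HasDerivAt (rayLik ℓ c a) (rayLikDeriv ℓ ℓ' c a s) s :=
  (hasDerivAt_sum_ray c a s hℓ).exp

lemma hasDerivAt_rayLikDeriv (hℓ : ∀ t w, HasDerivAt (ℓ t) (ℓ' t w) w)
    (hℓ' : ∀ t w, HasDerivAt (ℓ' t) (ℓ'' t w) w) :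
    HasDerivAt (rayLikDeriv ℓ ℓ' c a) (rayLikDeriv₂ ℓ ℓ' ℓ'' c a s) s := by
  have hsum : HasDerivAt (fun s => ∑ t, ℓ' t (c t + s * a t) * a t)
      (∑ t, ℓ'' t (c t + s * a t) * a t * a t) s :=
    hasDerivAt_sum_ray (f := fun t w => ℓ' t w * a t) c a s fun t w => (hℓ' t w).mul_const (a t)
  refine ((hasDerivAt_rayLik c a s hℓ).fun_mul hsum).congr_deriv ?_
  simp only [rayLikDeriv, rayLikDeriv₂, pow_two, mul_assoc]
  ring

lemma abs_sum_mul_le {b C : ι → ℝ} (hb : ∀ t, |b t| ≤ C t) :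
    |∑ t, b t * a t| ≤ ∑ t, C t * |a t| :=
  (Finset.abs_sum_le_sum_abs _ _).trans <| Finset.sum_le_sum fun t _ => by
    rw [abs_mul]
    exact mul_le_mul_of_nonneg_right (hb t) (abs_nonneg _)

variable {B C D : ι → ℝ}

lemma abs_rayLik_le (hB : ∀ t w, ℓ t w ≤ B t) : |rayLik ℓ c a s| ≤ Real.exp (∑ t, B t) := by
  rw [rayLik, Real.abs_exp, Real.exp_le_exp]
  exact Finset.sum_le_sum fun t _ => hB t _

lemma abs_rayLikDeriv_le (hB : ∀ t w, ℓ t w ≤ B t) (hC : ∀ t w, |ℓ' t w| ≤ C t) :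
    |rayLikDeriv ℓ ℓ' c a s| ≤ Real.exp (∑ t, B t) * ∑ t, C t * |a t| := by
  rw [rayLikDeriv, abs_mul]
  exact mul_le_mul (abs_rayLik_le c a s hB) (abs_sum_mul_le a fun t => hC t _)
    (abs_nonneg _) (Real.exp_pos _).le

lemma abs_rayLikDeriv₂_le (hB : ∀ t w, ℓ t w ≤ B t) (hC : ∀ t w, |ℓ' t w| ≤ C t)
    (hD : ∀ t w, |ℓ'' t w| ≤ D t) :
    |rayLikDeriv₂ ℓ ℓ' ℓ'' c a s| ≤
      Real.exp (∑ t, B t) * ((∑ t, C t * |a t|) ^ 2 + ∑ t, D t * a t ^ 2) := by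
  rw [rayLikDeriv₂, abs_mul]
  refine mul_le_mul (abs_rayLik_le c a s hB) ((abs_add_le _ _).trans (add_le_add ?_ ?_))
    (abs_nonneg _) (Real.exp_pos _).le
  · rw [abs_pow]
    exact pow_le_pow_left₀ (abs_nonneg _) (abs_sum_mul_le a fun t => hC t _) 2
  · have h_le := abs_sum_mul_le (fun t => a t ^ 2) fun t => hD t (c t + s * a t)
    simpa only [abs_of_nonneg (sq_nonneg (a _))] using h_le

end Ray

section Score

variable {ι Ω : Type*} [Fintype ι] [MeasurableSpace Ω] {P : Measure Ω} {X : ι → Ω → ℝ}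
  {ℓ ℓ' ℓ'' : ι → ℝ → ℝ}

section FiniteMeasure

variable [IsFiniteMeasure P]

lemma hasDerivWithinAt_integral_rayLik_sqrt (hℓ : ∀ t, IsRegularLogLik (ℓ t) (ℓ' t) (ℓ'' t))
    (c : ι → ℝ) (hX : ∀ t, MemLp (X t) 2 P) (hX_mean : ∀ t, ∫ ω, X t ω ∂P = 0) :
    HasDerivWithinAt (fun τ => ∫ ω, rayLik ℓ c (X · ω) √τ ∂P)
      (2⁻¹ * ∫ ω, rayLikDeriv₂ ℓ ℓ' ℓ'' c (X · ω) 0 ∂P) (Set.Ici 0) 0 := by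
  choose B hB using fun t => (hℓ t).exists_le
  choose C hC using fun t => (hℓ t).exists_abs_deriv_le
  choose D hD using fun t => (hℓ t).exists_abs_deriv_deriv_le
  have hX_meas (t : ι) : AEStronglyMeasurable (X t) P := (hX t).aestronglyMeasurable
  have hℓ_cont (t : ι) : Continuous (ℓ t) := (hℓ t).continuous
  have hℓ'_cont (t : ι) : Continuous (ℓ' t) := (hℓ t).continuous_deriv
  have hrayLik_meas (s : ℝ) : AEStronglyMeasurable (fun ω => rayLik ℓ c (X · ω) s) P := by
    unfold rayLik
    fun_prop
  have hderiv₂_meas : AEStronglyMeasurable (fun ω => rayLikDeriv₂ ℓ ℓ' ℓ'' c (X · ω) 0) P := by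
    simp only [rayLikDeriv₂, rayLik, zero_mul, add_zero]
    fun_prop
  have hX_int (t : ι) : Integrable (X t) P := (hX t).integrable one_le_two
  have hsum_memLp : MemLp (fun ω => ∑ t, C t * |X t ω|) 2 P :=
    memLp_finsetSum _ fun t _ => (hX t).abs.const_mul _
  have hsq_int : Integrable (fun ω => ∑ t, D t * X t ω ^ 2) P :=
    integrable_finsetSum _ fun t _ => (hX t).integrable_sq.const_mul _
  have hmean : ∫ ω, rayLikDeriv ℓ ℓ' c (X · ω) 0 ∂P = 0 := by
    simp only [rayLikDeriv, rayLik, zero_mul, add_zero, integral_const_mul]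
    rw [integral_finsetSum _ fun t _ => (hX_int t).const_mul _]
    simp [integral_const_mul, hX_mean]
  exact hasDerivWithinAt_integral_comp_sqrt_zero
    (fun ω s => hasDerivAt_rayLik c (X · ω) s fun t => (hℓ t).hasDerivAt)
    (fun ω s => hasDerivAt_rayLikDeriv c (X · ω) s (fun t => (hℓ t).hasDerivAt)
      fun t => (hℓ t).hasDerivAt_deriv)
    (fun s => Integrable.of_bound (hrayLik_meas s) _ (ae_of_all _ fun ω => abs_rayLik_le c _ s hB))
    (fun s => (hrayLik_meas s).mul (by fun_prop))
    hderiv₂_meas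
    (fun ω s => abs_rayLikDeriv_le c (X · ω) s hB hC)
    ((hsum_memLp.integrable one_le_two).const_mul _)
    (fun ω s => abs_rayLikDeriv₂_le c (X · ω) s hB hC hD)
    ((hsum_memLp.integrable_sq.add hsq_int).const_mul _) hmean

lemma integral_sq_sum_mul (hX : ∀ t, MemLp (X t) 2 P) (hX_mean : ∀ t, ∫ ω, X t ω ∂P = 0)
    (a : ι → ℝ) :
    ∫ ω, (∑ t, a t * X t ω) ^ 2 ∂P = ∑ t, ∑ s, a t * a s * cov[X s, X t; P] := by
  have hmean : ∫ ω, ∑ t, a t * X t ω ∂P = 0 := by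
    rw [integral_finsetSum _ fun t _ => ((hX t).integrable one_le_two).const_mul _]
    simp [integral_const_mul, hX_mean]
  have haX (t : ι) : MemLp (fun ω => a t * X t ω) 2 P := (hX t).const_mul _
  rw [← variance_of_integral_eq_zero (memLp_finsetSum _ fun t _ => haX t).aemeasurable hmean,
    variance_fun_sum haX]
  refine Finset.sum_congr rfl fun t _ => Finset.sum_congr rfl fun s _ => ?_
  rw [covariance_const_mul_left, covariance_const_mul_right, covariance_comm]
  ring

lemma integral_rayLikDeriv₂_zero (ℓ ℓ' ℓ'' : ι → ℝ → ℝ) (c : ι → ℝ)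
    (hX : ∀ t, MemLp (X t) 2 P) (hX_mean : ∀ t, ∫ ω, X t ω ∂P = 0) :
    ∫ ω, rayLikDeriv₂ ℓ ℓ' ℓ'' c (X · ω) 0 ∂P = Real.exp (∑ t, ℓ t (c t)) *
      (∑ t, ∑ s, ℓ' t (c t) * ℓ' s (c s) * cov[X s, X t; P]
        + ∑ t, ℓ'' t (c t) * cov[X t, X t; P]) := by
  have hlin : MemLp (fun ω => ∑ t, ℓ' t (c t) * X t ω) 2 P :=
    memLp_finsetSum _ fun t _ => (hX t).const_mul _
  have hsq_int (t : ι) : Integrable (fun ω => ℓ'' t (c t) * X t ω ^ 2) P :=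
    (hX t).integrable_sq.const_mul _
  simp only [rayLikDeriv₂, rayLik, zero_mul, add_zero, integral_const_mul]
  rw [integral_add hlin.integrable_sq (integrable_finsetSum _ fun t _ => hsq_int t),
    integral_sq_sum_mul hX hX_mean, integral_finsetSum _ fun t _ => hsq_int t]
  simp only [integral_const_mul, covariance_self (hX _).aemeasurable,
    variance_of_integral_eq_zero (hX _).aemeasurable (hX_mean _)]

end FiniteMeasure

theorem statement2_general [DecidableEq ι] [IsProbabilityMeasure P]
    (hℓ : ∀ t, IsRegularLogLik (ℓ t) (ℓ' t) (ℓ'' t)) (c : ι → ℝ)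
    (hX : ∀ t, MemLp (X t) 2 P) (hX_mean : ∀ t, ∫ ω, X t ω ∂P = 0)
    {R : Matrix ι ι ℝ} (hR : ∀ s t, cov[X s, X t; P] = R s t) :
    HasDerivWithinAt
      (fun τ => Real.log (∫ ω, Real.exp (∑ t, ℓ t (c t + √τ * X t ω)) ∂P))
      ((1 / 2 : ℝ) * ∑ t, (ℓ' t (c t) ^ 2 + ℓ'' t (c t)) * R t t
        + (1 / 2 : ℝ) * ∑ t, ∑ s ∈ Finset.univ.erase t, ℓ' t (c t) * ℓ' s (c s) * R s t)
      (Set.Ici 0) 0 := by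
  have hzero : ∫ ω, rayLik ℓ c (X · ω) √0 ∂P = Real.exp (∑ t, ℓ t (c t)) := by simp [rayLik]
  have hderiv := (hasDerivWithinAt_integral_rayLik_sqrt hℓ c hX hX_mean).log
    (hzero.trans_ne (Real.exp_ne_zero _))
  refine hderiv.congr_deriv ?_
  have hsplit (t : ι) : ∑ s, ℓ' t (c t) * ℓ' s (c s) * R s t = ℓ' t (c t) ^ 2 * R t t +
      ∑ s ∈ Finset.univ.erase t, ℓ' t (c t) * ℓ' s (c s) * R s t := by
    rw [← Finset.add_sum_erase _ _ (Finset.mem_univ t), pow_two]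
  rw [hzero, integral_rayLikDeriv₂_zero ℓ ℓ' ℓ'' c hX hX_mean, mul_left_comm,
    mul_div_cancel_left₀ _ (Real.exp_ne_zero _)]
  simp only [hR, hsplit, add_mul, Finset.sum_add_distrib]
  ring

end Score

section Binomial

lemma hasDerivAt_bfun (w : ℝ) : HasDerivAt bfun (bdot w) w :=
  ((Real.hasDerivAt_exp w).const_add 1).log (by positivity)

lemma hasDerivAt_bdot (w : ℝ) : HasDerivAt bdot (bddot w) w := by
  refine ((Real.hasDerivAt_exp w).div ((Real.hasDerivAt_exp w).const_add 1)
    (by positivity)).congr_deriv ?_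
  unfold bddot bdot
  field_simp

lemma bfun_nonneg (w : ℝ) : 0 ≤ bfun w :=
  Real.log_nonneg (by linarith [Real.exp_pos w])

lemma le_bfun (w : ℝ) : w ≤ bfun w := by
  rw [bfun, Real.le_log_iff_exp_le (by positivity)]
  linarith

lemma bdot_mem_Icc (w : ℝ) : bdot w ∈ Set.Icc 0 1 := by
  unfold bdot
  refine ⟨by positivity, ?_⟩
  rw [div_le_one (by positivity)]
  linarith

lemma bddot_mem_Icc (w : ℝ) : bddot w ∈ Set.Icc 0 1 :=
  unitInterval.mul_mem (bdot_mem_Icc w) (Set.Icc.mem_iff_one_sub_mem.1 (bdot_mem_Icc w))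

lemma isRegularLogLik_binomial {m y : ℝ} (hy_nonneg : 0 ≤ y) (hy_le : y ≤ m) :
    IsRegularLogLik (fun w => y * w - m * bfun w) (fun w => y - m * bdot w)
      (fun w => -(m * bddot w)) where
  hasDerivAt w := by
    simpa using ((hasDerivAt_id w).const_mul y).fun_sub ((hasDerivAt_bfun w).const_mul m)
  hasDerivAt_deriv w := ((hasDerivAt_bdot w).const_mul m).const_sub y
  exists_le := ⟨0, fun w => by
    have h_le : y * w ≤ y * bfun w := mul_le_mul_of_nonneg_left (le_bfun w) hy_nonneg
    have h_le' : y * bfun w ≤ m * bfun w := mul_le_mul_of_nonneg_right hy_le (bfun_nonneg w)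
    linarith⟩
  exists_abs_deriv_le := ⟨m, fun w => by
    obtain ⟨h_nonneg, h_le⟩ := bdot_mem_Icc w
    rw [abs_le]
    constructor <;> nlinarith⟩
  exists_abs_deriv_deriv_le := ⟨m, fun w => by
    obtain ⟨h_nonneg, h_le⟩ := bddot_mem_Icc w
    rw [abs_le]
    constructor <;> nlinarith⟩

end Binomial

section GaussianDensity

lemma pi_withDensity_ofReal {ι : Type*} [Fintype ι] {α : ι → Type*} [∀ i, MeasurableSpace (α i)]
    {μ : ∀ i, Measure (α i)} [∀ i, SigmaFinite (μ i)] {f : ∀ i, α i → ℝ}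
    (hf_nonneg : ∀ i x, 0 ≤ f i x) (hf_int : ∀ i, Integrable (f i) (μ i)) :
    Measure.pi (fun i => (μ i).withDensity fun x => ENNReal.ofReal (f i x)) =
      (Measure.pi μ).withDensity fun z => ENNReal.ofReal (∏ i, f i (z i)) := by
  have (i : ι) : IsFiniteMeasure ((μ i).withDensity fun x => ENNReal.ofReal (f i x)) :=
    isFiniteMeasure_withDensity_ofReal (hf_int i).2
  refine Measure.pi_eq fun s hs => ?_
  rw [withDensity_apply _ (MeasurableSet.univ_pi hs), Measure.restrict_pi_pi,
    ← ofReal_integral_eq_lintegral_ofReal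
      (Integrable.fintype_prod_dep fun i => (hf_int i).restrict)
      (ae_of_all _ fun z => Finset.prod_nonneg fun i _ => hf_nonneg i _),
    integral_fintype_prod_eq_prod,
    ENNReal.ofReal_prod_of_nonneg fun i _ => integral_nonneg (hf_nonneg i)]
  refine Finset.prod_congr rfl fun i _ => ?_
  rw [withDensity_apply _ (hs i), ofReal_integral_eq_lintegral_ofReal (hf_int i).restrict
    (ae_of_all _ (hf_nonneg i))]

lemma prod_gaussianPDFReal_zero_one {ι : Type*} [Fintype ι] (z : ι → ℝ) :
    ∏ i, gaussianPDFReal 0 1 (z i) =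
      (2 * π) ^ (-(Fintype.card ι : ℝ) / 2) * Real.exp (-(1 / 2) * (z ⬝ᵥ z)) := by
  have h_nonneg : (0 : ℝ) ≤ 2 * π := by positivity
  simp only [gaussianPDFReal, Finset.prod_mul_distrib, ← Real.exp_sum]
  congr 1
  · rw [Finset.prod_const, Finset.card_univ, NNReal.coe_one, mul_one,
      Real.sqrt_eq_rpow, ← Real.rpow_neg h_nonneg, ← Real.rpow_natCast, ← Real.rpow_mul h_nonneg]
    congr 1
    ring
  · simp only [dotProduct, Finset.mul_sum, sub_zero, NNReal.coe_one]
    congr 1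
    exact Finset.sum_congr rfl fun i _ => by ring

lemma map_mulVec_withDensity {ι : Type*} [Fintype ι] [DecidableEq ι] {A : Matrix ι ι ℝ}
    (hA : A.det ≠ 0) {f : (ι → ℝ) → ENNReal} (hf : Measurable f) :
    (volume.withDensity fun z => ENNReal.ofReal |A.det| * f (A *ᵥ z)).map (A *ᵥ ·) =
      volume.withDensity f := by
  have hmul : Measurable (A *ᵥ · : (ι → ℝ) → ι → ℝ) := by fun_prop
  have hvol : (volume : Measure (ι → ℝ)) = ENNReal.ofReal |A.det| • volume.map (A *ᵥ ·) := by
    have hmap : volume.map (A *ᵥ ·) = ENNReal.ofReal |A.det⁻¹| • (volume : Measure (ι → ℝ)) :=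
      Real.map_matrix_volume_pi_eq_smul_volume_pi hA
    rw [hmap, smul_smul, ← ENNReal.ofReal_mul (abs_nonneg _), ← abs_mul, mul_inv_cancel₀ hA,
      abs_one, ENNReal.ofReal_one, one_smul]
  ext s hs
  rw [Measure.map_apply hmul hs, withDensity_apply _ (hmul hs), withDensity_apply _ hs,
    lintegral_const_mul _ (show Measurable fun z => f (A *ᵥ z) from hf.comp hmul)]
  conv_rhs => rw [hvol, Measure.restrict_smul, lintegral_smul_measure, setLIntegral_map hs hf hmul]
  rfl

variable {n : ℕ} {R : Matrix (Fin n) (Fin n) ℝ}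

lemma mvnDens_nonneg (hR : 0 ≤ R.det) (α : Fin n → ℝ) : 0 ≤ mvnDens R α := by
  unfold mvnDens
  positivity

lemma continuous_mvnDens (R : Matrix (Fin n) (Fin n) ℝ) : Continuous (mvnDens R) := by
  unfold mvnDens
  fun_prop

lemma abs_det_mul_mvnDens_mulVec {A : Matrix (Fin n) (Fin n) ℝ} (hA_det : A.det ≠ 0)
    (hA_mul : A * Aᵀ = R) (z : Fin n → ℝ) :
    |A.det| * mvnDens R (A *ᵥ z) = ∏ i, gaussianPDFReal 0 1 (z i) := by
  have hA_unit : IsUnit A.det := isUnit_iff_ne_zero.2 hA_det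
  have hA_transpose_unit : IsUnit Aᵀ.det := by rwa [det_transpose]
  have hquad : (A *ᵥ z) ⬝ᵥ (R⁻¹ *ᵥ (A *ᵥ z)) = z ⬝ᵥ z := by
    rw [← hA_mul, Matrix.mul_inv_rev, mulVec_mulVec, Matrix.mul_assoc,
      Matrix.nonsing_inv_mul _ hA_unit, Matrix.mul_one, ← vecMul_transpose, ← dotProduct_mulVec,
      mulVec_mulVec, Matrix.mul_nonsing_inv _ hA_transpose_unit, one_mulVec]
  have hdet : R.det ^ (-(1 : ℝ) / 2) = |A.det|⁻¹ := by
    rw [← hA_mul, det_mul, det_transpose, ← abs_mul_abs_self, ← pow_two, ← Real.rpow_natCast,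
      ← Real.rpow_mul (abs_nonneg _), ← Real.rpow_neg_one]
    congr 1
    norm_num
  have hA_abs : |A.det| ≠ 0 := abs_ne_zero.2 hA_det
  rw [prod_gaussianPDFReal_zero_one, Fintype.card_fin, mvnDens, hquad, hdet]
  field_simp

lemma map_mulVec_pi_gaussianReal {A : Matrix (Fin n) (Fin n) ℝ} (hA_det : A.det ≠ 0)
    (hA_mul : A * Aᵀ = R) :
    (Measure.pi fun _ : Fin n => gaussianReal 0 1).map (A *ᵥ ·) =
      volume.withDensity fun α => ENNReal.ofReal (mvnDens R α) := by
  have hpi : (Measure.pi fun _ : Fin n => gaussianReal 0 1) =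
      volume.withDensity fun z => ENNReal.ofReal |A.det| * ENNReal.ofReal (mvnDens R (A *ᵥ z)) := by
    simp only [gaussianReal_of_var_ne_zero 0 one_ne_zero, gaussianPDF_def,
      ← ENNReal.ofReal_mul (abs_nonneg A.det), abs_det_mul_mvnDens_mulVec hA_det hA_mul]
    exact pi_withDensity_ofReal (fun _ => gaussianPDFReal_nonneg 0 1)
      fun _ => integrable_gaussianPDFReal 0 1
  rw [hpi]
  exact map_mulVec_withDensity (f := fun α => ENNReal.ofReal (mvnDens R α)) hA_det
    (continuous_mvnDens R).measurable.ennreal_ofReal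

open scoped MatrixOrder in
lemma map_ofLp_multivariateGaussian (hR : R.PosDef) :
    (multivariateGaussian 0 R).map WithLp.ofLp =
      volume.withDensity fun α => ENNReal.ofReal (mvnDens R α) := by
  have hsqrt_mul : CFC.sqrt R * CFC.sqrt R = R :=
    CFC.sqrt_mul_sqrt_self R hR.posSemidef.nonneg
  have hsqrt_transpose : (CFC.sqrt R)ᵀ = CFC.sqrt R := by
    rw [← conjTranspose_eq_transpose_of_trivial]
    exact (CFC.sqrt_nonneg R).isSelfAdjoint
  have hsqrt_mul_transpose : CFC.sqrt R * (CFC.sqrt R)ᵀ = R := by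
    rw [hsqrt_transpose, hsqrt_mul]
  have hsqrt_det : (CFC.sqrt R).det ≠ 0 := fun h => hR.det_pos.ne' <| by
    rw [← hsqrt_mul, det_mul, h, zero_mul]
  rw [← map_mulVec_pi_gaussianReal hsqrt_det hsqrt_mul_transpose,
    multivariateGaussian, ← map_pi_eq_stdGaussian, Measure.map_map (by fun_prop) (by fun_prop),
    Measure.map_map (by fun_prop) (by fun_prop)]
  congr 1
  funext z
  simp

lemma integral_mul_mvnDens (hR : R.PosDef) (f : (Fin n → ℝ) → ℝ) :
    ∫ α, f α * mvnDens R α = ∫ w, f (WithLp.ofLp w) ∂multivariateGaussian 0 R := by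
  have hmap : ∫ α, f α ∂(multivariateGaussian 0 R).map WithLp.ofLp =
      ∫ w, f (WithLp.ofLp w) ∂multivariateGaussian 0 R :=
    (MeasurableEquiv.toLp 2 (Fin n → ℝ)).symm.measurableEmbedding.integral_map f
  rw [← hmap, map_ofLp_multivariateGaussian hR, integral_withDensity_eq_integral_toReal_smul
    (continuous_mvnDens R).measurable.ennreal_ofReal (ae_of_all _ fun _ => ENNReal.ofReal_lt_top)]
  simp only [ENNReal.toReal_ofReal (mvnDens_nonneg hR.det_pos.le _), smul_eq_mul, mul_comm]

lemma integral_eval_multivariateGaussian {ι : Type*} [Fintype ι] [DecidableEq ι]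
    (μ : EuclideanSpace ℝ ι) (S : Matrix ι ι ℝ) (t : ι) :
    ∫ w, w t ∂multivariateGaussian μ S = μ t := by
  simpa using (EuclideanSpace.proj (𝕜 := ℝ) t).integral_comp_id_comm
    (IsGaussian.integrable_id (μ := multivariateGaussian μ S))

end GaussianDensity

/-- The score of the parameter-driven likelihood with respect to the latent
variance at `τ = 0`: with
`L(τ) = ∫_{ℝⁿ} exp( Σ_t [ y_t (x_tᵀβ + √τ α_t) − m_t b(x_tᵀβ + √τ α_t) ] ) dN(0,R)(α)`,
the function `τ ↦ log L(τ)` is right-differentiable at `τ = 0` with right derivative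
`(1/2) Σ_t [e_t² − m_t b̈(x_tᵀβ)] + (1/2) Σ_t Σ_{s≠t} e_t e_s R_{s,t}`,
where `e_t = y_t − m_t ḃ(x_tᵀβ)`. -/
theorem statement2 (n r : ℕ) (hn : 1 ≤ n)
    (m : Fin n → ℕ) (hm : ∀ t, 1 ≤ m t)
    (y : Fin n → ℕ) (hy : ∀ t, y t ≤ m t)
    (x : Fin n → Fin r → ℝ) (β : Fin r → ℝ)
    (R : Matrix (Fin n) (Fin n) ℝ) (hRsymm : R.IsSymm) (hRpos : R.PosDef)
    (hRdiag : ∀ t, R t t = 1)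
    (L : ℝ → ℝ)
    (hL : ∀ τ, L τ = ∫ α : Fin n → ℝ,
        Real.exp (∑ t, ((y t : ℝ) * (x t ⬝ᵥ β + Real.sqrt τ * α t)
          - (m t : ℝ) * bfun (x t ⬝ᵥ β + Real.sqrt τ * α t))) * mvnDens R α)
    (e : Fin n → ℝ) (he : ∀ t, e t = (y t : ℝ) - (m t : ℝ) * bdot (x t ⬝ᵥ β)) :
    HasDerivWithinAt (fun τ => Real.log (L τ))
      ((1 / 2 : ℝ) * ∑ t, ((e t) ^ 2 - (m t : ℝ) * bddot (x t ⬝ᵥ β))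
        + (1 / 2 : ℝ) * ∑ t, ∑ s ∈ Finset.univ.erase t, e t * e s * R s t)
      (Set.Ici 0) 0 := by
  have hL_gaussian : L = fun τ => ∫ w, Real.exp (∑ t, ((y t : ℝ) * (x t ⬝ᵥ β + √τ * w t)
      - (m t : ℝ) * bfun (x t ⬝ᵥ β + √τ * w t))) ∂multivariateGaussian 0 R :=
    funext fun τ => (hL τ).trans (integral_mul_mvnDens hRpos _)
  simpa [hL_gaussian, hRdiag, he, sub_eq_add_neg] using statement2_general
    (fun t => isRegularLogLik_binomial (Nat.cast_nonneg (y t)) (Nat.cast_le.2 (hy t)))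
    (fun t => x t ⬝ᵥ β)
    (fun t => IsGaussian.memLp_dual (multivariateGaussian 0 R) (EuclideanSpace.proj t) 2 (by simp))
    (integral_eval_multivariateGaussian 0 R)
    (covariance_eval_multivariateGaussian hRpos.posSemidef)

end
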